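/- Let (Ω, F, P) be a probability space and let X : Ω → ℝ be a nonnegative integrable random variable. Then E[√((X² + 2X)/(1 + X)²)] ≤ √(1 − 1/(1 + E[X])²); equivalently, E[−√((X² + 2X)/(1 + X)²)] ≥ −√(1 − 1/(1 + E[X])²). -/

import Mathlib

open MeasureTheory

/-- The map `x ↦ √(1 - 1/(1+x)²)` is concave on `[0, ∞)`. -/
theorem concaveOn_sqrt_one_sub_one_div_sq :
    ConcaveOn ℝ (Set.Ici 0) fun x : ℝ => Real.sqrt (1 - 1 / (1 + x) ^ 2) := by
  refine ⟨convex_Ici 0, fun x hx y hy a b ha hb hab => ?_⟩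
  have nonneg_of_nonneg : ∀ z : ℝ, 0 ≤ z → 0 ≤ 1 - 1 / (1 + z) ^ 2 := fun z hz => by
    rw [sub_nonneg, div_le_one (by positivity)]
    nlinarith
  simp only [Set.mem_Ici] at hx hy
  have hsqrt := Real.strictConcaveOn_sqrt.concaveOn.2 (nonneg_of_nonneg x hx)
    (nonneg_of_nonneg y hy) ha hb hab
  refine hsqrt.trans (Real.sqrt_le_sqrt ?_)
  have hpow := (convexOn_zpow (𝕜 := ℝ) (-2)).2 (x := 1 + x) (y := 1 + y)
    (by simp only [Set.mem_Ioi]; positivity) (by simp only [Set.mem_Ioi]; positivity) ha hb hab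
  have hcomb : a * (1 + x) + b * (1 + y) = 1 + (a * x + b * y) := by linear_combination hab
  simp only [smul_eq_mul, zpow_neg, hcomb] at hpow ⊢
  norm_cast at hpow
  simp only [one_div]
  linarith

/-- For a nonnegative integrable random variable `X`,
`E[√((X² + 2X)/(1+X)²)] ≤ √(1 - 1/(1 + E[X])²)`; equivalently
`E[-√((X² + 2X)/(1+X)²)] ≥ -√(1 - 1/(1 + E[X])²)`. -/
theorem expectation_sqrt_dispersion_le {Ω : Type*} [MeasurableSpace Ω]
    (P : Measure Ω) [IsProbabilityMeasure P] (X : Ω → ℝ)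
    (hm : Measurable X) (hnn : ∀ ω, 0 ≤ X ω) (hint : Integrable X P) :
    (∫ ω, Real.sqrt ((X ω ^ 2 + 2 * X ω) / (1 + X ω) ^ 2) ∂P ≤
        Real.sqrt (1 - 1 / (1 + ∫ ω, X ω ∂P) ^ 2)) ∧
      (∫ ω, -Real.sqrt ((X ω ^ 2 + 2 * X ω) / (1 + X ω) ^ 2) ∂P ≥
        -Real.sqrt (1 - 1 / (1 + ∫ ω, X ω ∂P) ^ 2)) := by
  have hcongr : ∀ ω, Real.sqrt ((X ω ^ 2 + 2 * X ω) / (1 + X ω) ^ 2) =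
      Real.sqrt (1 - 1 / (1 + X ω) ^ 2) := fun ω => by
    have : 1 + X ω ≠ 0 := by linarith [hnn ω]
    congr 1
    field_simp
    ring
  have hcont : ContinuousOn (fun x : ℝ => Real.sqrt (1 - 1 / (1 + x) ^ 2)) (Set.Ici 0) := by
    refine (continuousOn_const.sub (continuousOn_const.div (by fun_prop) fun x hx => ?_)).sqrt
    have : (0 : ℝ) ≤ x := hx
    positivity
  have hbdd : Integrable (fun ω => Real.sqrt (1 - 1 / (1 + X ω) ^ 2)) P := by
    refine .of_bound (Measurable.aestronglyMeasurable (by fun_prop)) 1 (.of_forall fun ω => ?_)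
    rw [Real.norm_of_nonneg (Real.sqrt_nonneg _), Real.sqrt_le_one]
    have : 0 ≤ 1 / (1 + X ω) ^ 2 := by positivity
    linarith
  have hJensen := concaveOn_sqrt_one_sub_one_div_sq.le_map_integral hcont isClosed_Ici
    (.of_forall hnn) hint hbdd
  simp only [hcongr, integral_neg]
  exact ⟨hJensen, neg_le_neg hJensen⟩
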